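/- Let (G, z, P, b) be an instance of Hitting Paths in a Flower and let R_i be a petal. If ℓ_1 < ℓ_2 and the canonical ℓ_1-th and ℓ_2-th solutions for R_i are well defined as X_{i,ℓ_1} and X_{i,ℓ_2}, then max(X_{i,ℓ_1}) ≤ max(X_{i,ℓ_2}). -/

import Mathlib

/-!  Formalization of the "Hitting Paths in a Flower" setting.

A flower graph is a graph with a distinguished core vertex `z` such that every
connected component of `G − z` is a path (a *petal*) no interior vertex of which
is adjacent to `z`.  We represent (up to isomorphism) a flower with `n` petals,
petal `i` having `L i ≥ 1` vertices `r_{i,1}, …, r_{i,L i}`, by the vertex type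
`Option (Fin n × ℕ)`: the core `z` is `none`, and `some (i, j)` (for `1 ≤ j ≤ L i`)
is the `j`-th vertex of petal `i`.  Booleans `al i` / `ar i` record whether the
left/right endpoint of petal `i` is adjacent to the core.  Since hitting a path
only depends on its vertex set, paths are recorded by their vertex sets; the
predicate `IsFlowerPath` characterizes the vertex sets of simple paths of the
flower graph. -/

/-- Vertices of an `n`-petal flower: `none` is the core `z`,
`some (i, j)` is vertex `r_{i,j}` of petal `i`. -/
abbrev FVertex (n : ℕ) := Option (Fin n × ℕ)

/-- The core vertex `z`. -/
def fz {n : ℕ} : FVertex n := none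

/-- The vertex `r_{i,j}` of petal `i`. -/
def fv {n : ℕ} (i : Fin n) (j : ℕ) : FVertex n := some (i, j)

/-- The set of vertices of petal `i` with indices in `s`. -/
def petalSeg {n : ℕ} (i : Fin n) (s : Finset ℕ) : Finset (FVertex n) :=
  s.image (fun j => fv i j)

/-- Index sets of subpaths of petal `i` that can be attached to the core in a simple
path through `z`: the empty set, a prefix `{1, …, c}` whose left endpoint `r_{i,1}`
is adjacent to `z`, or a suffix `{c, …, L i}` whose right endpoint `r_{i,L i}` is
adjacent to `z`. -/
def IsZSeg {n : ℕ} (L : Fin n → ℕ) (al ar : Fin n → Bool) (i : Fin n)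
    (s : Finset ℕ) : Prop :=
  s = ∅ ∨
  (al i = true ∧ ∃ c, 1 ≤ c ∧ c ≤ L i ∧ s = Finset.Icc 1 c) ∨
  (ar i = true ∧ ∃ c, 1 ≤ c ∧ c ≤ L i ∧ s = Finset.Icc c (L i))

/-- `p` is the vertex set of a simple path in the flower graph: either an interval of
one petal, or the core `z` together with (at most) two core-attachable petal segments
which are disjoint if they lie in the same petal. -/
def IsFlowerPath {n : ℕ} (L : Fin n → ℕ) (al ar : Fin n → Bool)
    (p : Finset (FVertex n)) : Prop :=
  (∃ (i : Fin n) (a c : ℕ), 1 ≤ a ∧ a ≤ c ∧ c ≤ L i ∧ p = petalSeg i (Finset.Icc a c)) ∨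
  (∃ (i₁ i₂ : Fin n) (s₁ s₂ : Finset ℕ), IsZSeg L al ar i₁ s₁ ∧ IsZSeg L al ar i₂ s₂ ∧
    (i₁ = i₂ → Disjoint s₁ s₂) ∧ p = insert fz (petalSeg i₁ s₁ ∪ petalSeg i₂ s₂))

/-- An instance `(G, z, P, b)` of Hitting Paths in a Flower: a flower graph with `n`
petals of sizes `L i ≥ 1` (the Booleans `al`, `ar` telling which petal endpoints are
adjacent to the core), a finite set `P` of simple paths in the flower (given by their
vertex sets), and a budget function `b` with `b i ≥ 1`. -/
structure FlowerInstance (n : ℕ) where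
  /-- number of vertices of petal `i` -/
  L : Fin n → ℕ
  hL : ∀ i, 1 ≤ L i
  /-- whether the left endpoint `r_{i,1}` of petal `i` is adjacent to the core -/
  al : Fin n → Bool
  /-- whether the right endpoint `r_{i,L i}` of petal `i` is adjacent to the core -/
  ar : Fin n → Bool
  /-- the set of simple paths to be hit, given by their vertex sets -/
  P : Finset (Finset (FVertex n))
  hP : ∀ p ∈ P, IsFlowerPath L al ar p
  /-- the budget function -/
  b : Fin n → ℕ
  hb : ∀ i, 1 ≤ b i

/-- The (vertex set of) petal `R_i`. -/
def FlowerInstance.petal {n : ℕ} (F : FlowerInstance n) (i : Fin n) :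
    Finset (FVertex n) :=
  petalSeg i (Finset.Icc 1 (F.L i))

/-- A solution: a set `X ⊆ V(G) ∖ {z}` that intersects every path of `P` and contains
exactly `b i` vertices of petal `R_i`, for every `i`. -/
def FlowerInstance.IsSolution {n : ℕ} (F : FlowerInstance n)
    (X : Finset (FVertex n)) : Prop :=
  (∀ x ∈ X, ∃ (i : Fin n) (j : ℕ), 1 ≤ j ∧ j ≤ F.L i ∧ x = fv i j) ∧
  (∀ p ∈ F.P, (X ∩ p).Nonempty) ∧
  (∀ i : Fin n, (X ∩ F.petal i).card = F.b i)

/-- The pairs `(a, c)` with `1 ≤ a ≤ c ≤ L i` such that the interval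
`{r_{i,a}, …, r_{i,c}}` of petal `i` is (the vertex set of) a path of `P`;
these are exactly the paths of `P` contained entirely within petal `R_i`. -/
def FlowerInstance.innerIntervals {n : ℕ} (F : FlowerInstance n) (i : Fin n) :
    Finset (ℕ × ℕ) :=
  ((Finset.Icc 1 (F.L i)) ×ˢ (Finset.Icc 1 (F.L i))).filter
    (fun q => q.1 ≤ q.2 ∧ petalSeg i (Finset.Icc q.1 q.2) ∈ F.P)

/-- The intervals among `I` that are not intersected by `X`. -/
def unhit (I : Finset (ℕ × ℕ)) (X : Finset ℕ) : Finset (ℕ × ℕ) :=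
  I.filter (fun q => ∀ j ∈ X, ¬ (q.1 ≤ j ∧ j ≤ q.2))

/-- Step (2a) of the canonical-solution process: while some interval of `I` is not
intersected by `X`, add the minimum right endpoint of an unhit interval.  The fuel
argument only ensures termination; `I.card` iterations always suffice. -/
def greedyA (I : Finset (ℕ × ℕ)) : ℕ → Finset ℕ → Finset ℕ
  | 0, X => X
  | (fuel + 1), X =>
    if h : (unhit I X).Nonempty then
      greedyA I fuel (insert (((unhit I X).image Prod.snd).min' (h.image _)) X)
    else X

/-- Step (2b) of the canonical-solution process: while `|X| < bdg` and
`Y := Icc lo hi \ X` is nonempty, add the largest element of `Y`.  The fuel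
argument only ensures termination; `bdg` iterations always suffice. -/
def greedyB (lo hi bdg : ℕ) : ℕ → Finset ℕ → Finset ℕ
  | 0, X => X
  | (fuel + 1), X =>
    if h : X.card < bdg ∧ ((Finset.Icc lo hi) \ X).Nonempty then
      greedyB lo hi bdg fuel (insert (((Finset.Icc lo hi) \ X).max' h.2) X)
    else X

/-- The set `X_{i,ℓ}` produced by steps (2), (2a), (2b) of the canonical-solution
process for petal `R_i`, starting from `X_{i,ℓ} = {ℓ}`. -/
def FlowerInstance.canonicalAux {n : ℕ} (F : FlowerInstance n) (i : Fin n) (ℓ : ℕ) :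
    Finset ℕ :=
  greedyB ℓ (F.L i) (F.b i) (F.b i)
    (greedyA (F.innerIntervals i) (F.innerIntervals i).card {ℓ})

/-- The canonical `ℓ`-th solution for petal `R_i` (given by the indices of its
vertices on the petal), or `none` (NIL) if step (1) applies — some path of `P` is
contained within `{r_{i,1}, …, r_{i,ℓ-1}}` — or if the produced set does not have
exactly `b i` elements (step (2c)). -/
def FlowerInstance.canonical {n : ℕ} (F : FlowerInstance n) (i : Fin n) (ℓ : ℕ) :
    Option (Finset ℕ) :=
  if ∃ q ∈ F.innerIntervals i, q.2 < ℓ then none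
  else if (F.canonicalAux i ℓ).card = F.b i then some (F.canonicalAux i ℓ) else none

/-! Suppose `X₁` contains some `m` beyond all of `X₂`. Then `X₂` misses the last vertex of the
petal, so step (2b) added nothing, and `X₂` consists of `ℓ₂` and the right endpoints of pairwise
disjoint paths lying between `ℓ₂` and `m`. Since `X₁` hits each of these paths and also contains
the vertices `ℓ₁` and `m`, which lie on none of them, `X₁` has more elements than `X₂`,
contradicting `|X₁| = b i = |X₂|`. -/

open Finset

theorem card_add_card_le_of_pairwiseDisjoint {ι α : Type*} {D : Finset ι} {f : ι → Set α}
    {X T : Finset α} (hD : (D : Set ι).PairwiseDisjoint f) (hX : ∀ a ∈ D, ∃ x ∈ X, x ∈ f a)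
    (hTX : T ⊆ X) (hT : ∀ a ∈ D, ∀ t ∈ T, t ∉ f a) : #D + #T ≤ #X := by
  classical
  have hle : #D ≤ #(X \ T) := by
    refine card_le_card_of_forall_subsingleton (fun a x => x ∈ f a) (fun a ha => ?_)
      fun x _ a ha a' ha' => hD.elim_set ha.1 ha'.1 x ha.2 ha'.2
    obtain ⟨x, hx, hxa⟩ := hX a ha
    exact ⟨x, mem_sdiff.2 ⟨hx, fun hxT => hT a ha x hxT hxa⟩, hxa⟩
  rw [← card_sdiff_add_card_eq_card hTX]
  gcongr

/-- `X` meets every interval of `I`, a pair `q` standing for the interval from `q.1` to `q.2`. It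
expresses that a set of vertices of a petal hits all paths of `P` inside that petal. -/
def IsHittingSet {α : Type*} [Preorder α] (I : Finset (α × α)) (X : Finset α) : Prop :=
  ∀ q ∈ I, ∃ j ∈ X, j ∈ Set.Icc q.1 q.2

theorem IsHittingSet.mono {α : Type*} [Preorder α] {I : Finset (α × α)} {X Y : Finset α}
    (hX : IsHittingSet I X) (hXY : X ⊆ Y) : IsHittingSet I Y := by
  intro q hq
  obtain ⟨j, hj, hjq⟩ := hX q hq
  exact ⟨j, hXY hj, hjq⟩

theorem IsHittingSet.card_add_two_le {α : Type*} [Preorder α] {D : Finset (α × α)} {X : Finset α}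
    {a c : α} (hX : IsHittingSet D X)
    (hD : (D : Set (α × α)).PairwiseDisjoint (fun q => Set.Icc q.1 q.2))
    (haX : a ∈ X) (hcX : c ∈ X) (hac : a < c)
    (haD : ∀ q ∈ D, a < q.1) (hDc : ∀ q ∈ D, q.2 < c) : #D + 2 ≤ #X := by
  classical
  rw [← card_pair hac.ne]
  refine card_add_card_le_of_pairwiseDisjoint hD hX
    (insert_subset haX (singleton_subset_iff.2 hcX)) fun q hq t ht htq => ?_
  rcases mem_insert.1 ht with rfl | htc
  · exact (haD q hq).not_ge htq.1
  · exact (hDc q hq).not_ge (mem_singleton.1 htc ▸ htq.2)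

section GreedyA

variable {I : Finset (ℕ × ℕ)} {X : Finset ℕ} {fuel : ℕ}

theorem mem_unhit {q : ℕ × ℕ} : q ∈ unhit I X ↔ q ∈ I ∧ ∀ j ∈ X, j ∉ Set.Icc q.1 q.2 :=
  mem_filter

theorem unhit_anti {Y : Finset ℕ} (hXY : X ⊆ Y) : unhit I Y ⊆ unhit I X := fun _ hq =>
  mem_unhit.2 ⟨(mem_unhit.1 hq).1, fun j hj => (mem_unhit.1 hq).2 j (hXY hj)⟩

theorem isHittingSet_of_unhit_eq_empty (h : unhit I X = ∅) : IsHittingSet I X := by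
  intro q hq
  by_contra! hmiss
  exact notMem_empty q (h ▸ mem_unhit.2 ⟨hq, hmiss⟩)

theorem exists_greedyA_succ_eq (h : (unhit I X).Nonempty) :
    ∃ q ∈ unhit I X, (∀ q' ∈ unhit I X, q.2 ≤ q'.2) ∧
      greedyA I (fuel + 1) X = greedyA I fuel (insert q.2 X) := by
  obtain ⟨q, hq, hmin⟩ := mem_image.1 (min'_mem _ (h.image Prod.snd))
  refine ⟨q, hq, fun q' hq' => ?_, ?_⟩
  · exact hmin ▸ min'_le _ _ (mem_image_of_mem _ hq')
  · rw [greedyA, dif_pos h, hmin]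

theorem greedyA_succ_eq_self (h : unhit I X = ∅) : greedyA I (fuel + 1) X = X := by
  rw [greedyA, dif_neg (not_nonempty_iff_eq_empty.2 h)]

theorem greedyA_induction {motive : Finset ℕ → Prop} (base : motive X)
    (step : ∀ Y, ∀ q ∈ unhit I Y, (∀ q' ∈ unhit I Y, q.2 ≤ q'.2) → motive Y →
      motive (insert q.2 Y)) :
    motive (greedyA I fuel X) := by
  induction fuel generalizing X with
  | zero => exact base
  | succ fuel ih =>
    rcases (unhit I X).eq_empty_or_nonempty with hempty | hne
    · rwa [greedyA_succ_eq_self hempty]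
    · obtain ⟨q, hq, hmin, heq⟩ := exists_greedyA_succ_eq (fuel := fuel) hne
      exact heq ▸ ih (step X q hq hmin base)

theorem subset_greedyA : X ⊆ greedyA I fuel X :=
  greedyA_induction (motive := (X ⊆ ·)) Subset.rfl
    fun _ _ _ _ hY => hY.trans (subset_insert _ _)

theorem greedyA_subset : greedyA I fuel X ⊆ X ∪ I.image Prod.snd :=
  greedyA_induction (motive := (· ⊆ X ∪ I.image Prod.snd)) subset_union_left
    fun _ _ hq _ hY =>
      insert_subset (mem_union_right _ (mem_image_of_mem _ (mem_unhit.1 hq).1)) hY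

theorem unhit_insert_snd_ssubset {q : ℕ × ℕ} (hq : q ∈ unhit I X) (hle : q.1 ≤ q.2) :
    unhit I (insert q.2 X) ⊂ unhit I X :=
  (unhit_anti (subset_insert _ _)).ssubset_of_mem_notMem hq fun hq' =>
    (mem_unhit.1 hq').2 q.2 (mem_insert_self _ _) ⟨hle, le_rfl⟩

theorem isHittingSet_greedyA (hI : ∀ q ∈ I, q.1 ≤ q.2) (hfuel : #(unhit I X) ≤ fuel) :
    IsHittingSet I (greedyA I fuel X) := by
  induction fuel generalizing X with
  | zero => exact isHittingSet_of_unhit_eq_empty (card_eq_zero.1 (Nat.le_zero.1 hfuel))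
  | succ fuel ih =>
    rcases (unhit I X).eq_empty_or_nonempty with hempty | hne
    · rw [greedyA_succ_eq_self hempty]
      exact isHittingSet_of_unhit_eq_empty hempty
    · obtain ⟨q, hq, -, heq⟩ := exists_greedyA_succ_eq (fuel := fuel) hne
      have hlt := card_lt_card (unhit_insert_snd_ssubset hq (hI q (mem_unhit.1 hq).1))
      exact heq ▸ ih (by lia)

theorem lt_fst_of_mem_unhit_insert_snd {q : ℕ × ℕ} (hX : ∀ q' ∈ unhit I X, ∀ x ∈ X, x < q'.1)
    (hmin : ∀ q' ∈ unhit I X, q.2 ≤ q'.2) :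
    ∀ q' ∈ unhit I (insert q.2 X), ∀ x ∈ insert q.2 X, x < q'.1 := by
  intro q' hq' x hx
  have hq'X : q' ∈ unhit I X := unhit_anti (subset_insert _ _) hq'
  rcases mem_insert.1 hx with rfl | hxX
  · by_contra! hle
    exact (mem_unhit.1 hq').2 q.2 hx ⟨hle, hmin q' hq'X⟩
  · exact hX q' hq'X x hxX

theorem exists_pairwiseDisjoint_greedyA_eq (hX : ∀ q ∈ unhit I X, ∀ x ∈ X, x < q.1) :
    ∃ D ⊆ unhit I X, (D : Set (ℕ × ℕ)).PairwiseDisjoint (fun q => Set.Icc q.1 q.2) ∧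
      greedyA I fuel X = X ∪ D.image Prod.snd := by
  -- The invariant also records that every unhit interval lies to the right of the current set.
  suffices h : (∀ q ∈ unhit I (greedyA I fuel X), ∀ x ∈ greedyA I fuel X, x < q.1) ∧
      ∃ D ⊆ unhit I X, (D : Set (ℕ × ℕ)).PairwiseDisjoint (fun q => Set.Icc q.1 q.2) ∧
        greedyA I fuel X = X ∪ D.image Prod.snd from h.2
  refine greedyA_induction (motive := fun Y => (∀ q ∈ unhit I Y, ∀ y ∈ Y, y < q.1) ∧
      ∃ D ⊆ unhit I X, (D : Set (ℕ × ℕ)).PairwiseDisjoint (fun q => Set.Icc q.1 q.2) ∧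
        Y = X ∪ D.image Prod.snd) ⟨hX, ∅, by simp⟩ ?_
  rintro Y q hq hmin ⟨hright, D, hDX, hD, hY⟩
  refine ⟨lt_fst_of_mem_unhit_insert_snd hright hmin, insert q D, ?_, ?_, ?_⟩
  · exact insert_subset (unhit_anti (hY ▸ subset_union_left) hq) hDX
  · rw [coe_insert]
    refine hD.insert fun q' hq' _ => Set.disjoint_left.2 fun j hjq hjq' => ?_
    have hlt : q'.2 < q.1 := hright q hq _ (hY ▸ mem_union_right _ (mem_image_of_mem _ hq'))
    exact (hjq'.2.trans_lt hlt).not_ge hjq.1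
  · rw [image_insert, union_insert, ← hY]

end GreedyA

section GreedyB

variable {lo hi bdg fuel : ℕ} {X : Finset ℕ}

theorem greedyB_induction {motive : Finset ℕ → Prop} (base : motive X)
    (step : ∀ Y, ∀ x ∈ Icc lo hi \ Y, motive Y → motive (insert x Y)) :
    motive (greedyB lo hi bdg fuel X) := by
  induction fuel generalizing X with
  | zero => exact base
  | succ fuel ih =>
    rw [greedyB]
    split_ifs with h
    · exact ih (step X _ (max'_mem _ h.2) base)
    · exact base

theorem subset_greedyB : X ⊆ greedyB lo hi bdg fuel X :=
  greedyB_induction (motive := (X ⊆ ·)) Subset.rfl fun _ _ _ hY => hY.trans (subset_insert _ _)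

theorem greedyB_subset : greedyB lo hi bdg fuel X ⊆ X ∪ Icc lo hi :=
  greedyB_induction (motive := (· ⊆ X ∪ Icc lo hi)) subset_union_left
    fun _ _ hx hY => insert_subset (mem_union_right _ (mem_sdiff.1 hx).1) hY

theorem max'_Icc_sdiff_eq_right (hlo : lo ≤ hi) (hX : hi ∉ X) (h : (Icc lo hi \ X).Nonempty) :
    (Icc lo hi \ X).max' h = hi :=
  le_antisymm (mem_Icc.1 (mem_sdiff.1 (max'_mem _ h)).1).2
    (le_max' _ _ (mem_sdiff.2 ⟨right_mem_Icc.2 hlo, hX⟩))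

theorem greedyB_eq_self_of_right_notMem (hlo : lo ≤ hi) (h : hi ∉ greedyB lo hi bdg fuel X) :
    greedyB lo hi bdg fuel X = X := by
  have hX : hi ∉ X := fun hmem => h (subset_greedyB hmem)
  cases fuel with
  | zero => rfl
  | succ fuel =>
    rw [greedyB] at h ⊢
    split_ifs at h ⊢ with hstep
    · rw [max'_Icc_sdiff_eq_right hlo hX] at h
      exact absurd (subset_greedyB (mem_insert_self hi X)) h
    · rfl

end GreedyB

namespace FlowerInstance

variable {n : ℕ} {F : FlowerInstance n} {i : Fin n} {ℓ : ℕ}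

theorem fst_le_snd_of_mem_innerIntervals {q : ℕ × ℕ} (hq : q ∈ F.innerIntervals i) :
    q.1 ≤ q.2 :=
  (mem_filter.1 hq).2.1

theorem snd_le_of_mem_innerIntervals {q : ℕ × ℕ} (hq : q ∈ F.innerIntervals i) :
    q.2 ≤ F.L i :=
  (mem_Icc.1 (mem_product.1 (mem_filter.1 hq).1).2).2

theorem canonical_eq_some_iff {X : Finset ℕ} :
    F.canonical i ℓ = some X ↔
      (∀ q ∈ F.innerIntervals i, ℓ ≤ q.2) ∧ F.canonicalAux i ℓ = X ∧ #X = F.b i := by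
  simp only [canonical, Option.ite_none_left_eq_some, Option.ite_none_right_eq_some,
    Option.some_inj, not_exists, not_and, not_lt]
  exact and_congr_right fun _ =>
    ⟨fun ⟨hcard, hX⟩ => ⟨hX, hX ▸ hcard⟩, fun ⟨hX, hcard⟩ => ⟨hX ▸ hcard, hX⟩⟩

theorem self_mem_canonicalAux : ℓ ∈ F.canonicalAux i ℓ :=
  subset_greedyB (subset_greedyA (mem_singleton_self ℓ))

theorem le_of_mem_canonicalAux (hℓ : ℓ ≤ F.L i) {x : ℕ} (hx : x ∈ F.canonicalAux i ℓ) :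
    x ≤ F.L i := by
  rcases mem_union.1 (greedyB_subset hx) with hxA | hxB
  · rcases mem_union.1 (greedyA_subset hxA) with hxℓ | hxI
    · exact (mem_singleton.1 hxℓ).trans_le hℓ
    · obtain ⟨q, hq, rfl⟩ := mem_image.1 hxI
      exact snd_le_of_mem_innerIntervals hq
  · exact (mem_Icc.1 hxB).2

theorem isHittingSet_canonicalAux : IsHittingSet (F.innerIntervals i) (F.canonicalAux i ℓ) :=
  (isHittingSet_greedyA (fun _ => fst_le_snd_of_mem_innerIntervals)
    (card_le_card (filter_subset _ _))).mono subset_greedyB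

theorem exists_pairwiseDisjoint_canonicalAux_eq (hℓ : ℓ ≤ F.L i)
    (hleft : ∀ q ∈ F.innerIntervals i, ℓ ≤ q.2) (hlast : F.L i ∉ F.canonicalAux i ℓ) :
    ∃ D ⊆ F.innerIntervals i,
      (D : Set (ℕ × ℕ)).PairwiseDisjoint (fun q => Set.Icc q.1 q.2) ∧
      (∀ q ∈ D, ℓ < q.1) ∧ F.canonicalAux i ℓ = insert ℓ (D.image Prod.snd) := by
  have hright : ∀ q ∈ unhit (F.innerIntervals i) {ℓ}, ℓ < q.1 := by
    intro q hq
    obtain ⟨hqI, hmiss⟩ := mem_unhit.1 hq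
    by_contra! hle
    exact hmiss ℓ (mem_singleton_self ℓ) ⟨hle, hleft q hqI⟩
  obtain ⟨D, hDI, hD, heq⟩ := exists_pairwiseDisjoint_greedyA_eq
    (I := F.innerIntervals i) (X := {ℓ}) (fuel := #(F.innerIntervals i)) (by simpa using hright)
  exact ⟨D, hDI.trans (filter_subset _ _), hD, fun q hq => hright q (hDI hq),
    (greedyB_eq_self_of_right_notMem hℓ hlast).trans heq⟩

end FlowerInstance

/-- **Lemma: later solutions reach further.** If `ℓ₁ < ℓ₂` and the
canonical `ℓ₁`-th and `ℓ₂`-th solutions for petal `R_i` are well defined as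
`X₁` and `X₂`, then `max X₁ ≤ max X₂`. -/
theorem stmt_5 {n : ℕ} (F : FlowerInstance n) (i : Fin n) (ℓ₁ ℓ₂ : ℕ)
    (h1 : 1 ≤ ℓ₁) (h12 : ℓ₁ < ℓ₂) (h2 : ℓ₂ ≤ F.L i) (X₁ X₂ : Finset ℕ)
    (hX₁ : F.canonical i ℓ₁ = some X₁) (hX₂ : F.canonical i ℓ₂ = some X₂) :
    X₁.max ≤ X₂.max := by
  obtain ⟨-, rfl, hcard₁⟩ := FlowerInstance.canonical_eq_some_iff.1 hX₁
  obtain ⟨hleft, rfl, hcard₂⟩ := FlowerInstance.canonical_eq_some_iff.1 hX₂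
  refine Finset.max_le fun m hm => ?_
  by_contra! hlt
  have hbeyond : ∀ y ∈ F.canonicalAux i ℓ₂, y < m := fun y hy =>
    WithBot.coe_lt_coe.1 ((le_max hy).trans_lt hlt)
  have hℓ₂m : ℓ₂ < m := hbeyond ℓ₂ FlowerInstance.self_mem_canonicalAux
  have hlast : F.L i ∉ F.canonicalAux i ℓ₂ := fun hmem =>
    (hbeyond _ hmem).not_ge (FlowerInstance.le_of_mem_canonicalAux (h12.le.trans h2) hm)
  obtain ⟨D, hDI, hD, hℓD, heq⟩ :=
    FlowerInstance.exists_pairwiseDisjoint_canonicalAux_eq h2 hleft hlast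
  have hDm : ∀ q ∈ D, q.2 < m := fun q hq =>
    hbeyond _ (heq ▸ mem_insert_of_mem (mem_image_of_mem _ hq))
  have hlower : #D + 2 ≤ #(F.canonicalAux i ℓ₁) :=
    IsHittingSet.card_add_two_le
      (fun q hq => FlowerInstance.isHittingSet_canonicalAux q (hDI hq)) hD
      FlowerInstance.self_mem_canonicalAux hm (h12.trans hℓ₂m)
      (fun q hq => h12.trans (hℓD q hq)) hDm
  have hupper : #(F.canonicalAux i ℓ₂) ≤ #D + 1 :=
    heq ▸ (card_insert_le _ _).trans (Nat.succ_le_succ card_image_le)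
  lia
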